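/- Monotonicity of α (pointwise form): let p > 1, λ > 0, and let (α, ψ) be a classical solution of (P)_λ with ψ ≥ 0 on Ω and σ₁(α,ψ) > 0, and let w ∈ C²(Ω̄), w = 0 on ∂Ω, satisfy −Δw = λp ρ_λ^{1/q} [w]_λ + ρ_λ in Ω. Then ⟨w⟩_λ > 0; more precisely, λp ⟨w⟩_λ ≥ λ(p−1) σ₁(α,ψ) ∫_Ω ρ_λ^{1/q} [w]_λ² + λ ∫_Ω ρ_λ ψ and ∫_Ω ρ_λ ψ > 0. -/

import Mathlib

/-!
Write `W = ρ^{1/q}` and `a = ⟨w⟩`, and let `[w] = w - a`. Testing the equation of `ψ` with `w` and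
that of `w` with `ψ` gives `∫ ρ w = λp ∫ W [w] ψ + ∫ ρ ψ`. Since `λ W ψ = ρ - α W`, `∫ W [w] = 0`
and `∫ ρ = 1`, one has `λ ∫ W [w] ψ = ∫ ρ w - a`, so that `p a = (p - 1) ∫ ρ w + ∫ ρ ψ`.
Testing the equation of `w` with `w` gives `∫ |∇w|² = λp ∫ W [w]² + ∫ ρ w`, and the stability
inequality for `w` turns this into `∫ ρ w ≥ σ₁ ∫ W [w]²`. Both claims about `⟨w⟩` follow, given
`∫ ρ ψ > 0` (`integral_rho_mul_pos`).

Two analytic facts are needed for functions that are `C²` inside `Ω`, continuous up to the boundary,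
zero there, and have bounded Laplacian (`Adm`). The first is Green's identity
`∫ ∇u · ∇v = ∫ (-Δu) v` (`green`). The function `v` is replaced by `trunc n (v)`, which is `C¹`
and vanishes for `|v| ≤ 1/n`, so it has compact support in `Ω`. The limit `n → ∞` uses Fatou's lemma
for finiteness of the energy, dominated convergence, and the fact that `∇v = 0` almost everywhere
on `{v = 0}`. The second is the stability inequality (`stab_adm`), which passes from test functions
to compactly supported `C¹` functions by mollification and then to `w` by the same truncation.
-/

open MeasureTheory Set Filter

noncomputable section

abbrev Euc (N : ℕ) := EuclideanSpace ℝ (Fin N)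

/-- The Laplacian as the sum of second partial derivatives. -/
def lap {N : ℕ} (f : Euc N → ℝ) (x : Euc N) : ℝ :=
  ∑ i : Fin N,
    fderiv ℝ (fun y => fderiv ℝ f y (EuclideanSpace.single i 1)) x (EuclideanSpace.single i 1)

/-- A bounded domain of class `C³`, described by a `C³` defining function. -/
def IsC3Domain {N : ℕ} (Ω : Set (Euc N)) : Prop :=
  IsOpen Ω ∧ IsConnected Ω ∧ Bornology.IsBounded Ω ∧
    ∃ F : Euc N → ℝ, ContDiff ℝ 3 F ∧ Ω = {x | F x < 0} ∧
      ∀ x ∈ frontier Ω, fderiv ℝ F x ≠ 0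

/-- `ρ_λ = [α+λψ]₊^p`. -/
def rho {N : ℕ} (p lam α : ℝ) (ψ : Euc N → ℝ) (x : Euc N) : ℝ :=
  (max (α + lam * ψ x) 0) ^ p

/-- `ρ_λ^{1/q} = [α+λψ]₊^{p-1}`. -/
def rhoq {N : ℕ} (p lam α : ℝ) (ψ : Euc N → ℝ) (x : Euc N) : ℝ :=
  (max (α + lam * ψ x) 0) ^ (p - 1)

/-- `(α, ψ)` is a classical solution of the constrained problem `(P)_λ` on `Ω`. -/
def SolP {N : ℕ} (Ω : Set (Euc N)) (p lam α : ℝ) (ψ : Euc N → ℝ) : Prop :=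
  ContinuousOn ψ (closure Ω) ∧ ContDiffOn ℝ 2 ψ Ω ∧
    (∀ x ∈ frontier Ω, ψ x = 0) ∧
    (∀ x ∈ Ω, -lap ψ x = rho p lam α ψ x) ∧
    ∫ x in Ω, rho p lam α ψ x = 1

/-- The weighted average `⟨φ⟩_λ`. -/
def avgl {N : ℕ} (Ω : Set (Euc N)) (p lam α : ℝ) (ψ φ : Euc N → ℝ) : ℝ :=
  (∫ x in Ω, rhoq p lam α ψ x * φ x) / ∫ x in Ω, rhoq p lam α ψ x

/-- `[φ]_λ = φ - ⟨φ⟩_λ`. -/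
def brk {N : ℕ} (Ω : Set (Euc N)) (p lam α : ℝ) (ψ φ : Euc N → ℝ) (x : Euc N) : ℝ :=
  φ x - avgl Ω p lam α ψ φ

/-- `φ ∈ C_c^∞(Ω)`. -/
def TestFun {N : ℕ} (Ω : Set (Euc N)) (φ : Euc N → ℝ) : Prop :=
  ContDiff ℝ (⊤ : ℕ∞) φ ∧ HasCompactSupport φ ∧ tsupport φ ⊆ Ω

/-- `∫_Ω ρ_λ^{1/q} [φ]_λ²`. -/
def wdenom {N : ℕ} (Ω : Set (Euc N)) (p lam α : ℝ) (ψ φ : Euc N → ℝ) : ℝ :=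
  ∫ x in Ω, rhoq p lam α ψ x * brk Ω p lam α ψ φ x ^ 2

/-- The Rayleigh-type quotient for the linearized problem. -/
def rayleigh {N : ℕ} (Ω : Set (Euc N)) (p lam α : ℝ) (ψ φ : Euc N → ℝ) : ℝ :=
  ((∫ x in Ω, ‖fderiv ℝ φ x‖ ^ 2) - lam * p * wdenom Ω p lam α ψ φ) / wdenom Ω p lam α ψ φ

/-- The weighted first eigenvalue `σ₁(α,ψ)`. -/
def sigma1 {N : ℕ} (Ω : Set (Euc N)) (p lam α : ℝ) (ψ : Euc N → ℝ) : ℝ :=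
  sInf {s | ∃ φ : Euc N → ℝ, TestFun Ω φ ∧ 0 < wdenom Ω p lam α ψ φ ∧
    s = rayleigh Ω p lam α ψ φ}

/-- The stability threshold `λ*(Ω,p)`. -/
def lamStar {N : ℕ} (Ω : Set (Euc N)) (p : ℝ) : ℝ :=
  sSup {lb : ℝ | 0 < lb ∧ ∀ lam α ψ, 0 ≤ lam → lam < lb → SolP Ω p lam α ψ →
    0 < sigma1 Ω p lam α ψ}

/-- The positivity threshold `λ₊(Ω,p)`. -/
def lamPlusD {N : ℕ} (Ω : Set (Euc N)) (p : ℝ) : ℝ :=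
  sSup {d : ℝ | 0 < d ∧ ∀ lam α ψ, 0 ≤ lam → lam < d → SolP Ω p lam α ψ → 0 < α}

/-- The Sobolev-type constant `Λ(Ω,t)`. -/
def LambdaC {N : ℕ} (Ω : Set (Euc N)) (t : ℝ) : ℝ :=
  sInf {s : ℝ | ∃ w : Euc N → ℝ, TestFun Ω w ∧ w ≠ 0 ∧
    s = (∫ x in Ω, ‖fderiv ℝ w x‖ ^ 2) / (∫ x in Ω, |w x| ^ t) ^ (2 / t)}

open scoped Topology Convolution

/-! ### Gradients in coordinates -/

/-- The `i`-th partial derivative. -/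
def pd {N : ℕ} (i : Fin N) (f : Euc N → ℝ) (x : Euc N) : ℝ :=
  fderiv ℝ f x (EuclideanSpace.single i 1)

/-- The pointwise inner product `∇f · ∇g`, written with partial derivatives. -/
def gdot {N : ℕ} (f g : Euc N → ℝ) (x : Euc N) : ℝ := ∑ i, pd i f x * pd i g x

lemma gdot_self {N : ℕ} (f : Euc N → ℝ) (x : Euc N) :
    gdot f f x = ‖fderiv ℝ f x‖ ^ 2 := by
  have h := (InnerProductSpace.toDual ℝ (Euc N)).symm.norm_map (fderiv ℝ f x)
  rw [← h, EuclideanSpace.norm_sq_eq]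
  refine Finset.sum_congr rfl fun i _ => ?_
  have h2 : fderiv ℝ f x (EuclideanSpace.single i 1)
      = ((InnerProductSpace.toDual ℝ (Euc N)).symm (fderiv ℝ f x)) i := by
    rw [← InnerProductSpace.toDual_symm_apply, EuclideanSpace.inner_single_right]
    simp
  rw [pd, h2, Real.norm_eq_abs, sq_abs, sq]

lemma abs_gdot_le {N : ℕ} (f g : Euc N → ℝ) (x : Euc N) :
    |gdot f g x| ≤ ‖fderiv ℝ f x‖ ^ 2 + ‖fderiv ℝ g x‖ ^ 2 := by
  rw [← gdot_self, ← gdot_self, gdot, gdot, gdot, ← Finset.sum_add_distrib]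
  refine (Finset.abs_sum_le_sum_abs _ _).trans (Finset.sum_le_sum fun i _ => ?_)
  rw [abs_le]
  constructor <;> nlinarith [sq_nonneg (pd i f x - pd i g x), sq_nonneg (pd i f x + pd i g x),
    sq_nonneg (pd i f x), sq_nonneg (pd i g x)]

/-! ### Truncation near zero -/

/-- A continuous cutoff: `0` for `|s| ≤ 1/n`, `1` for `|s| ≥ 2/n`, affine in `|s|` between. -/
def cut (n : ℕ) (s : ℝ) : ℝ := max 0 (min 1 (n * |s| - 1))

/-- The primitive of `cut n` vanishing at `0`: a `C¹` truncation of the identity that is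
zero near `0`. -/
def trunc (n : ℕ) (t : ℝ) : ℝ := ∫ s in (0 : ℝ)..t, cut n s

lemma cut_continuous (n : ℕ) : Continuous (cut n) := by unfold cut; fun_prop

lemma cut_nonneg (n : ℕ) (s : ℝ) : 0 ≤ cut n s := le_max_left _ _

lemma cut_le_one (n : ℕ) (s : ℝ) : cut n s ≤ 1 := max_le zero_le_one (min_le_left _ _)

lemma cut_tendsto {s : ℝ} (hs : s ≠ 0) : Tendsto (fun n => cut n s) atTop (𝓝 1) := by
  obtain ⟨m, hm⟩ := exists_nat_gt (2 / |s|)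
  have hs' := abs_pos.2 hs
  refine tendsto_const_nhds.congr' ?_
  filter_upwards [eventually_ge_atTop m] with n hn
  have h1 : (m : ℝ) ≤ n := by exact_mod_cast hn
  have h2 : 2 < (n : ℝ) * |s| := (div_lt_iff₀ hs').1 (hm.trans_le h1)
  unfold cut
  rw [min_eq_left (by linarith), max_eq_right zero_le_one]

lemma trunc_hasDerivAt (n : ℕ) (t : ℝ) : HasDerivAt (trunc n) (cut n t) t :=
  (cut_continuous n).integral_hasStrictDerivAt 0 t |>.hasDerivAt

lemma trunc_contDiff (n : ℕ) : ContDiff ℝ 1 (trunc n) := by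
  rw [contDiff_one_iff_deriv]
  refine ⟨fun t => (trunc_hasDerivAt n t).differentiableAt, ?_⟩
  have : deriv (trunc n) = cut n := funext fun t => (trunc_hasDerivAt n t).deriv
  rw [this]
  exact cut_continuous n

lemma abs_le_of_mem_uIoc {s t : ℝ} (hs : s ∈ Set.uIoc (0 : ℝ) t) : |s| ≤ |t| := by
  rcases mem_uIoc.1 hs with h | h
  · rw [abs_of_pos h.1]; exact h.2.trans (le_abs_self t)
  · rw [abs_of_nonpos h.2, abs_of_neg (h.1.trans_le h.2)]; linarith [h.1]

lemma trunc_eq_zero {n : ℕ} {t : ℝ} (h : (n : ℝ) * |t| ≤ 1) : trunc n t = 0 := by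
  refine intervalIntegral.integral_zero_ae (Eventually.of_forall fun s hs => ?_)
  have h1 : (n : ℝ) * |s| ≤ n * |t| :=
    mul_le_mul_of_nonneg_left (abs_le_of_mem_uIoc hs) (Nat.cast_nonneg n)
  exact max_eq_left ((min_le_right _ _).trans (by linarith))

lemma abs_trunc_le (n : ℕ) (t : ℝ) : |trunc n t| ≤ |t| := by
  have := intervalIntegral.norm_integral_le_of_norm_le_const (a := 0) (b := t) (C := 1)
    (f := cut n) (fun s _ => by
      rw [Real.norm_eq_abs, abs_of_nonneg (cut_nonneg n s)]; exact cut_le_one n s)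
  simpa [trunc] using this

lemma trunc_tendsto (t : ℝ) : Tendsto (fun n => trunc n t) atTop (𝓝 t) := by
  have h := intervalIntegral.tendsto_integral_filter_of_dominated_convergence
    (μ := volume) (a := (0 : ℝ)) (b := t) (l := atTop) (F := fun n => cut n) (f := fun _ => 1)
    (fun _ => (1 : ℝ))
    (Eventually.of_forall fun n => (cut_continuous n).aestronglyMeasurable)
    (Eventually.of_forall fun n => Eventually.of_forall fun s _ => by
      rw [Real.norm_eq_abs, abs_of_nonneg (cut_nonneg n s)]; exact cut_le_one n s)
    intervalIntegrable_const
    (by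
      filter_upwards [Measure.ae_ne volume (0 : ℝ)] with s hs _
      exact cut_tendsto hs)
  simpa [trunc] using h

/-- The truncation of `u` on `Ω`, extended by zero. -/
def truncOn {N : ℕ} (Ω : Set (Euc N)) (n : ℕ) (u : Euc N → ℝ) : Euc N → ℝ :=
  Ω.indicator fun x => trunc n (u x)

lemma truncOn_support {N : ℕ} {Ω : Set (Euc N)} (hΩ : IsOpen Ω) (hb : Bornology.IsBounded Ω)
    {u : Euc N → ℝ} (hc : ContinuousOn u (closure Ω)) (h0 : ∀ x ∈ frontier Ω, u x = 0) (n : ℕ) :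
    HasCompactSupport (truncOn Ω n u) ∧ tsupport (truncOn Ω n u) ⊆ Ω := by
  set K : Set (Euc N) := closure Ω ∩ (fun x => (n : ℝ) * |u x|) ⁻¹' Ici 1 with hK
  have hKcl : IsClosed K :=
    ContinuousOn.preimage_isClosed_of_isClosed (by fun_prop) isClosed_closure isClosed_Ici
  have hKc : IsCompact K := hb.isCompact_closure.of_isClosed_subset hKcl inter_subset_left
  have hKΩ : K ⊆ Ω := by
    rintro x ⟨hx, hx1⟩
    by_contra hxΩ
    have hxf : x ∈ frontier Ω := by rw [hΩ.frontier_eq]; exact ⟨hx, hxΩ⟩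
    have : (1 : ℝ) ≤ n * |u x| := hx1
    rw [h0 x hxf] at this
    norm_num at this
  have hsub : Function.support (truncOn Ω n u) ⊆ K := by
    intro x hx
    have hxΩ : x ∈ Ω := by
      by_contra h
      exact hx (indicator_of_notMem h _)
    refine ⟨subset_closure hxΩ, ?_⟩
    by_contra h
    refine hx ?_
    rw [truncOn, indicator_of_mem hxΩ]
    exact trunc_eq_zero (le_of_lt (not_le.1 h))
  have hts : tsupport (truncOn Ω n u) ⊆ K := closure_minimal hsub hKcl
  exact ⟨hKc.of_isClosed_subset (isClosed_tsupport _) hts, hts.trans hKΩ⟩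

lemma truncOn_eventuallyEq {N : ℕ} {Ω : Set (Euc N)} (hΩ : IsOpen Ω) (n : ℕ) (u : Euc N → ℝ)
    {x : Euc N} (hx : x ∈ Ω) : truncOn Ω n u =ᶠ[𝓝 x] fun y => trunc n (u y) := by
  filter_upwards [hΩ.mem_nhds hx] with y hy
  exact indicator_of_mem hy _

lemma truncOn_contDiff {N : ℕ} {Ω : Set (Euc N)} (hΩ : IsOpen Ω) (hb : Bornology.IsBounded Ω)
    {u : Euc N → ℝ} (hc : ContinuousOn u (closure Ω)) (h0 : ∀ x ∈ frontier Ω, u x = 0)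
    (hu : ContDiffOn ℝ 2 u Ω) (n : ℕ) : ContDiff ℝ 1 (truncOn Ω n u) := by
  rw [contDiff_iff_contDiffAt]
  intro x
  by_cases hx : x ∈ Ω
  · refine ContDiffAt.congr_of_eventuallyEq ?_ (truncOn_eventuallyEq hΩ n u hx)
    exact (trunc_contDiff n).contDiffAt.comp x
      ((hu.contDiffAt (hΩ.mem_nhds hx)).of_le (by norm_num))
  · have hx' : x ∉ tsupport (truncOn Ω n u) := fun h => hx ((truncOn_support hΩ hb hc h0 n).2 h)
    refine ContDiffAt.congr_of_eventuallyEq (f := fun _ => (0 : ℝ)) contDiffAt_const ?_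
    exact notMem_tsupport_iff_eventuallyEq.1 hx'

lemma truncOn_fderiv {N : ℕ} {Ω : Set (Euc N)} (hΩ : IsOpen Ω) {u : Euc N → ℝ}
    (hu : ContDiffOn ℝ 2 u Ω) (n : ℕ) {x : Euc N} (hx : x ∈ Ω) :
    fderiv ℝ (truncOn Ω n u) x = cut n (u x) • fderiv ℝ u x := by
  rw [(truncOn_eventuallyEq hΩ n u hx).fderiv_eq]
  have hd : DifferentiableAt ℝ u x :=
    (hu.contDiffAt (hΩ.mem_nhds hx)).differentiableAt (by norm_num)
  exact ((trunc_hasDerivAt n (u x)).comp_hasFDerivAt x hd.hasFDerivAt).fderiv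

/-! ### Integration by parts -/

lemma continuous_mul_of_tsupport_subset {N : ℕ} {Ω : Set (Euc N)} (hΩ : IsOpen Ω)
    {f g : Euc N → ℝ} (hf : ContinuousOn f Ω) (hg : Continuous g) (hs : tsupport g ⊆ Ω) :
    Continuous fun x => f x * g x := by
  rw [continuous_iff_continuousAt]
  intro x
  by_cases hx : x ∈ Ω
  · exact (hf.continuousAt (hΩ.mem_nhds hx)).mul hg.continuousAt
  · have hx' : x ∉ tsupport g := fun h => hx (hs h)
    refine ContinuousAt.congr (f := fun _ => (0 : ℝ)) continuousAt_const ?_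
    filter_upwards [notMem_tsupport_iff_eventuallyEq.1 hx'] with y hy
    simp [hy]

lemma integrable_mul_of_tsupport_subset {N : ℕ} {Ω : Set (Euc N)} (hΩ : IsOpen Ω)
    {f g : Euc N → ℝ} (hf : ContinuousOn f Ω) (hg : Continuous g) (hs : tsupport g ⊆ Ω)
    (hgc : HasCompactSupport g) : Integrable fun x => f x * g x :=
  (continuous_mul_of_tsupport_subset hΩ hf hg hs).integrable_of_hasCompactSupport hgc.mul_left

lemma pd_contDiffOn {N : ℕ} {Ω : Set (Euc N)} (hΩ : IsOpen Ω) {u : Euc N → ℝ}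
    (hu : ContDiffOn ℝ 2 u Ω) (i : Fin N) : ContDiffOn ℝ 1 (pd i u) Ω := by
  have h1 : ContDiffOn ℝ 1 (fderiv ℝ u) Ω := hu.fderiv_of_isOpen hΩ (by norm_num)
  exact h1.clm_apply contDiffOn_const

lemma pd_pd_continuousOn {N : ℕ} {Ω : Set (Euc N)} (hΩ : IsOpen Ω) {u : Euc N → ℝ}
    (hu : ContDiffOn ℝ 2 u Ω) (i : Fin N) : ContinuousOn (pd i (pd i u)) Ω :=
  ((pd_contDiffOn hΩ hu i).continuousOn_fderiv_of_isOpen hΩ (by norm_num)).clm_apply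
    continuousOn_const

lemma lap_eq {N : ℕ} (u : Euc N → ℝ) : lap u = fun x => ∑ i, pd i (pd i u) x := rfl

lemma lap_continuousOn {N : ℕ} {Ω : Set (Euc N)} (hΩ : IsOpen Ω) {u : Euc N → ℝ}
    (hu : ContDiffOn ℝ 2 u Ω) : ContinuousOn (lap u) Ω := by
  rw [lap_eq]
  exact continuousOn_finsetSum _ fun i _ => pd_pd_continuousOn hΩ hu i

/-- Integration by parts against a compactly supported `C¹` function. -/
lemma ibp {N : ℕ} {Ω : Set (Euc N)} (hΩ : IsOpen Ω) {u v : Euc N → ℝ}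
    (hu : ContDiffOn ℝ 2 u Ω) (hv : ContDiff ℝ 1 v) (hvc : HasCompactSupport v)
    (hs : tsupport v ⊆ Ω) :
    IntegrableOn (gdot u v) Ω ∧ ∫ x in Ω, gdot u v x = ∫ x in Ω, -lap u x * v x := by
  have hpc : ∀ i, Continuous (pd i v) := fun i =>
    (hv.continuous_fderiv (by norm_num)).clm_apply continuous_const
  have hpsub : ∀ i, Function.support (pd i v) ⊆ tsupport v := by
    intro i x hx
    refine support_fderiv_subset ℝ (f := v) fun h => hx ?_
    simp [pd, h]
  have hps : ∀ i, tsupport (pd i v) ⊆ Ω := fun i =>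
    (closure_minimal (hpsub i) (isClosed_tsupport v)).trans hs
  have hpcs : ∀ i, HasCompactSupport (pd i v) := fun i =>
    hvc.of_isClosed_subset (isClosed_tsupport _)
      (closure_minimal (hpsub i) (isClosed_tsupport v))
  have I1 : ∀ i, Integrable fun x => pd i u x * pd i v x := fun i =>
    integrable_mul_of_tsupport_subset hΩ (pd_contDiffOn hΩ hu i).continuousOn (hpc i) (hps i)
      (hpcs i)
  have I2 : ∀ i, Integrable fun x => pd i (pd i u) x * v x := fun i =>
    integrable_mul_of_tsupport_subset hΩ (pd_pd_continuousOn hΩ hu i) hv.continuous hs hvc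
  have I3 : ∀ i, Integrable fun x => pd i u x * v x := fun i =>
    integrable_mul_of_tsupport_subset hΩ (pd_contDiffOn hΩ hu i).continuousOn hv.continuous hs
      hvc
  have key : ∀ i, ∫ x, pd i u x * pd i v x = -∫ x, pd i (pd i u) x * v x := fun i =>
    integral_mul_fderiv_eq_neg_fderiv_mul_of_integrable (I2 i) (I1 i) (I3 i)
      (fun x hx => ((pd_contDiffOn hΩ hu i).contDiffAt (hΩ.mem_nhds (hs hx))).differentiableAt
        (by norm_num))
      (fun x _ => hv.differentiable (by norm_num) x)
  have hv0 : ∀ x, x ∉ Ω → v x = 0 := fun x hx => image_eq_zero_of_notMem_tsupport fun h => hx (hs h)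
  have hp0 : ∀ i x, x ∉ Ω → pd i v x = 0 := fun i x hx =>
    image_eq_zero_of_notMem_tsupport fun h => hx (hps i h)
  refine ⟨(integrable_finsetSum _ fun i _ => I1 i).integrableOn, ?_⟩
  rw [setIntegral_eq_integral_of_forall_compl_eq_zero (fun x hx => by simp [gdot, hp0 _ x hx]),
    setIntegral_eq_integral_of_forall_compl_eq_zero (fun x hx => by simp [hv0 x hx])]
  unfold gdot
  rw [integral_finsetSum _ fun i _ => I1 i]
  simp_rw [key]
  rw [Finset.sum_neg_distrib, ← integral_finsetSum _ fun i _ => I2 i, ← integral_neg]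
  refine integral_congr_ae (Eventually.of_forall fun x => ?_)
  simp [lap_eq, Finset.sum_mul]

/-- The gradient vanishes almost everywhere on the zero set: at a density point of `{u = 0}` the
derivative of `u` is determined by the restriction of `u` to that set. -/
lemma ae_fderiv_eq_zero {N : ℕ} {Ω : Set (Euc N)} (hΩ : IsOpen Ω) {u : Euc N → ℝ}
    (hu : ContDiffOn ℝ 2 u Ω) :
    ∀ᵐ x ∂volume.restrict Ω, u x = 0 → fderiv ℝ u x = 0 := by
  have hZ : MeasurableSet (Ω ∩ u ⁻¹' {0}) := by
    classical
    have := hu.continuousOn.measurable_piecewise (g := fun _ => (1 : ℝ)) continuousOn_const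
      hΩ.measurableSet (s := Ω)
    have h2 : Ω ∩ u ⁻¹' {0} = (Ω.piecewise u fun _ => (1 : ℝ)) ⁻¹' {0} := by
      ext x
      by_cases hx : x ∈ Ω <;> simp [hx]
    rw [h2]
    convert this (measurableSet_singleton 0)
  by_cases hN : ∃ e : Euc N, e ≠ 0
  · obtain ⟨e, he⟩ := hN
    have hd : ∀ x ∈ Ω ∩ u ⁻¹' {0}, HasFDerivWithinAt (fun y => u y • e)
        ((fderiv ℝ u x).smulRight e) (Ω ∩ u ⁻¹' {0}) x := fun x hx =>
      (((hu.contDiffAt (hΩ.mem_nhds hx.1)).differentiableAt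
        (by norm_num)).hasFDerivAt.smul_const e).hasFDerivWithinAt
    have hA : ApproximatesLinearOn (fun y => u y • e) (0 : Euc N →L[ℝ] Euc N)
        (Ω ∩ u ⁻¹' {0}) 0 := by
      rintro x hx y hy
      have h1 : u x = 0 := hx.2
      have h2 : u y = 0 := hy.2
      simp [h1, h2]
    have := hA.norm_fderiv_sub_le volume hZ _ hd
    rw [ae_restrict_iff' hZ] at this
    rw [ae_restrict_iff' hΩ.measurableSet]
    filter_upwards [this] with x hx hxΩ hx0
    have h3 := hx ⟨hxΩ, hx0⟩
    simp only [sub_zero, nonpos_iff_eq_zero, nnnorm_eq_zero] at h3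
    ext y
    have h4 := congrArg (fun L : Euc N →L[ℝ] Euc N => L y) h3
    simpa [he] using h4
  · push Not at hN
    refine Eventually.of_forall fun x _ => ?_
    ext y
    simp [hN y]

/-! ### Green's identity without boundary regularity of the gradient -/

/-- Functions continuous on `closure Ω`, of class `C²` in `Ω`, vanishing on the boundary and with
bounded Laplacian. -/
structure Adm {N : ℕ} (Ω : Set (Euc N)) (u : Euc N → ℝ) : Prop where
  cont : ContinuousOn u (closure Ω)
  reg : ContDiffOn ℝ 2 u Ω
  bd : ∀ x ∈ frontier Ω, u x = 0
  lapBound : ∃ C, ∀ x ∈ Ω, |lap u x| ≤ C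

lemma exists_bound {N : ℕ} {Ω : Set (Euc N)} (hb : Bornology.IsBounded Ω) {u : Euc N → ℝ}
    (hc : ContinuousOn u (closure Ω)) : ∃ M, 0 ≤ M ∧ ∀ x ∈ Ω, |u x| ≤ M := by
  obtain ⟨M, hM⟩ := hb.isCompact_closure.exists_bound_of_continuousOn hc
  exact ⟨max M 0, le_max_right _ _, fun x hx =>
    (hM x (subset_closure hx)).trans (le_max_left _ _)⟩

lemma Adm.normSq_continuousOn {N : ℕ} {Ω : Set (Euc N)} (hΩ : IsOpen Ω) {u : Euc N → ℝ}
    (hu : Adm Ω u) : ContinuousOn (fun x => ‖fderiv ℝ u x‖ ^ 2) Ω :=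
  ((hu.reg.continuousOn_fderiv_of_isOpen hΩ (by norm_num)).norm).pow 2

lemma gdot_continuousOn {N : ℕ} {Ω : Set (Euc N)} (hΩ : IsOpen Ω) {u v : Euc N → ℝ}
    (hu : Adm Ω u) (hv : Adm Ω v) : ContinuousOn (gdot u v) Ω :=
  continuousOn_finsetSum _ fun i _ => (pd_contDiffOn hΩ hu.reg i).continuousOn.mul
    (pd_contDiffOn hΩ hv.reg i).continuousOn

lemma gdot_truncOn {N : ℕ} {Ω : Set (Euc N)} (hΩ : IsOpen Ω) (u : Euc N → ℝ) {v : Euc N → ℝ}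
    (hv : ContDiffOn ℝ 2 v Ω) (n : ℕ) {x : Euc N} (hx : x ∈ Ω) :
    gdot u (truncOn Ω n v) x = cut n (v x) * gdot u v x := by
  simp only [gdot, pd, truncOn_fderiv hΩ hv n hx, Finset.mul_sum]
  refine Finset.sum_congr rfl fun i _ => ?_
  simp only [_root_.smul_apply, smul_eq_mul]
  ring

/-- Green's identity against a truncation. -/
lemma green_trunc {N : ℕ} {Ω : Set (Euc N)} (hΩ : IsOpen Ω) (hb : Bornology.IsBounded Ω)
    {u v : Euc N → ℝ} (hu : Adm Ω u) (hv : Adm Ω v) (n : ℕ) :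
    IntegrableOn (fun x => cut n (v x) * gdot u v x) Ω ∧
      ∫ x in Ω, cut n (v x) * gdot u v x = ∫ x in Ω, -lap u x * trunc n (v x) := by
  have hs := truncOn_support hΩ hb hv.cont hv.bd n
  obtain ⟨h1, h2⟩ := ibp hΩ hu.reg (truncOn_contDiff hΩ hb hv.cont hv.bd hv.reg n) hs.1 hs.2
  have e1 : EqOn (gdot u (truncOn Ω n v)) (fun x => cut n (v x) * gdot u v x) Ω :=
    fun x hx => gdot_truncOn hΩ u hv.reg n hx
  refine ⟨h1.congr_fun e1 hΩ.measurableSet, ?_⟩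
  rw [← setIntegral_congr_fun hΩ.measurableSet e1, h2]
  refine setIntegral_congr_fun hΩ.measurableSet fun x hx => ?_
  simp only [truncOn, indicator_of_mem hx]

/-- `cut n (v)` acts as the identity on `∇u · ∇v` in the limit, almost everywhere, because `∇v`
vanishes almost everywhere on `{v = 0}`. -/
lemma ae_tendsto_cut {N : ℕ} {Ω : Set (Euc N)} (hΩ : IsOpen Ω) (u : Euc N → ℝ) {v : Euc N → ℝ}
    (hv : Adm Ω v) : ∀ᵐ x ∂volume.restrict Ω,
      Tendsto (fun n => cut n (v x) * gdot u v x) atTop (𝓝 (gdot u v x)) := by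
  filter_upwards [ae_fderiv_eq_zero hΩ hv.reg] with x hx
  by_cases h : v x = 0
  · have : gdot u v x = 0 := by simp [gdot, pd, hx h]
    simp [this]
  · simpa using (cut_tendsto h).mul_const (gdot u v x)

/-- Admissible functions have finite Dirichlet energy: the truncated energies equal
`∫ (-Δu) trunc n (u)`, which is bounded in `n`, and Fatou's lemma applies. -/
lemma Adm.integrable_normSq {N : ℕ} {Ω : Set (Euc N)} (hΩ : IsOpen Ω)
    (hb : Bornology.IsBounded Ω) {u : Euc N → ℝ} (hu : Adm Ω u) :
    IntegrableOn (fun x => ‖fderiv ℝ u x‖ ^ 2) Ω := by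
  obtain ⟨M, hM0, hM⟩ := exists_bound hb hu.cont
  obtain ⟨C, hC⟩ := hu.lapBound
  have hfin : volume Ω < ⊤ := hb.measure_lt_top
  have hnn : ∀ x, 0 ≤ gdot u u x := fun x => by rw [gdot_self]; positivity
  have hbd : ∀ n : ℕ, ∫⁻ x in Ω, ENNReal.ofReal (cut n (u x) * gdot u u x)
      ≤ ENNReal.ofReal (C * M * volume.real Ω) := by
    intro n
    obtain ⟨h1, h2⟩ := green_trunc hΩ hb hu hu n
    rw [← ofReal_integral_eq_lintegral_ofReal h1
      (Eventually.of_forall fun x => mul_nonneg (cut_nonneg _ _) (hnn x)), h2]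
    refine ENNReal.ofReal_le_ofReal ((Real.le_norm_self _).trans ?_)
    refine norm_setIntegral_le_of_norm_le_const (C := C * M) hfin fun x hx => ?_
    rw [norm_mul, norm_neg]
    exact mul_le_mul (hC x hx) ((abs_trunc_le n _).trans (hM x hx)) (norm_nonneg _)
      ((abs_nonneg _).trans (hC x hx))
  have hlim : ∫⁻ x in Ω, ENNReal.ofReal (gdot u u x) ≤ ENNReal.ofReal (C * M * volume.real Ω) := by
    calc ∫⁻ x in Ω, ENNReal.ofReal (gdot u u x)
        = ∫⁻ x in Ω, liminf (fun n => ENNReal.ofReal (cut n (u x) * gdot u u x)) atTop := by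
          refine lintegral_congr_ae ?_
          filter_upwards [ae_tendsto_cut hΩ u hu] with x hx
          exact ((ENNReal.continuous_ofReal.tendsto _).comp hx).liminf_eq.symm
      _ ≤ liminf (fun n => ∫⁻ x in Ω, ENNReal.ofReal (cut n (u x) * gdot u u x)) atTop :=
          lintegral_liminf_le' fun n =>
            (green_trunc hΩ hb hu hu n).1.aestronglyMeasurable.aemeasurable.ennreal_ofReal
      _ ≤ _ := by
          refine (liminf_le_liminf (Eventually.of_forall hbd)).trans ?_
          rw [liminf_const]
  have hg : IntegrableOn (gdot u u) Ω := by
    refine ⟨(gdot_continuousOn hΩ hu hu).aestronglyMeasurable hΩ.measurableSet, ?_⟩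
    rw [hasFiniteIntegral_iff_ofReal (Eventually.of_forall hnn)]
    exact hlim.trans_lt ENNReal.ofReal_lt_top
  exact hg.congr_fun (fun x _ => gdot_self u x) hΩ.measurableSet

/-- Green's identity for admissible functions. No regularity of the gradients at the boundary is
needed, since both have finite energy. -/
lemma green {N : ℕ} {Ω : Set (Euc N)} (hΩ : IsOpen Ω) (hb : Bornology.IsBounded Ω)
    {u v : Euc N → ℝ} (hu : Adm Ω u) (hv : Adm Ω v) :
    ∫ x in Ω, gdot u v x = ∫ x in Ω, -lap u x * v x := by
  obtain ⟨M, hM0, hM⟩ := exists_bound hb hv.cont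
  obtain ⟨C, hC⟩ := hu.lapBound
  have hfin : volume Ω < ⊤ := hb.measure_lt_top
  have hlapc := lap_continuousOn hΩ hu.reg
  have hvc : ContinuousOn v Ω := hv.reg.continuousOn
  have L1 : Tendsto (fun n => ∫ x in Ω, cut n (v x) * gdot u v x) atTop
      (𝓝 (∫ x in Ω, gdot u v x)) := by
    refine tendsto_integral_of_dominated_convergence
      (fun x => ‖fderiv ℝ u x‖ ^ 2 + ‖fderiv ℝ v x‖ ^ 2)
      (fun n => (green_trunc hΩ hb hu hv n).1.aestronglyMeasurable)
      (Integrable.add (hu.integrable_normSq hΩ hb) (hv.integrable_normSq hΩ hb))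
      (fun n => Eventually.of_forall fun x => ?_) (ae_tendsto_cut hΩ u hv)
    rw [norm_mul, Real.norm_eq_abs, abs_of_nonneg (cut_nonneg _ _)]
    exact (mul_le_of_le_one_left (norm_nonneg _) (cut_le_one _ _)).trans (abs_gdot_le u v x)
  have L2 : Tendsto (fun n => ∫ x in Ω, -lap u x * trunc n (v x)) atTop
      (𝓝 (∫ x in Ω, -lap u x * v x)) := by
    refine tendsto_integral_of_dominated_convergence (fun _ => C * M) (fun n => ?_)
      (integrableOn_const hfin.ne) (fun n => ?_) (Eventually.of_forall fun x => ?_)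
    · exact (hlapc.neg.mul ((trunc_contDiff n).continuous.comp_continuousOn hvc)).aestronglyMeasurable
        hΩ.measurableSet
    · filter_upwards [ae_restrict_mem hΩ.measurableSet] with x hx
      rw [norm_mul, norm_neg]
      exact mul_le_mul (hC x hx) ((abs_trunc_le n _).trans (hM x hx)) (norm_nonneg _)
        ((abs_nonneg _).trans (hC x hx))
    · exact (trunc_tendsto (v x)).const_mul _
  refine tendsto_nhds_unique L1 (L2.congr fun n => ?_)
  exact (green_trunc hΩ hb hu hv n).2.symm

/-! ### The stability inequality -/

lemma wdenom_tendsto {N : ℕ} {Ω : Set (Euc N)} (hΩ : IsOpen Ω) (hb : Bornology.IsBounded Ω)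
    {p lam α : ℝ} {ψ : Euc N → ℝ} (hWc : ContinuousOn (rhoq p lam α ψ) Ω) {B : ℝ}
    (hB : ∀ x ∈ Ω, |rhoq p lam α ψ x| ≤ B) {f : ℕ → Euc N → ℝ} {φ : Euc N → ℝ} {M : ℝ}
    (hfc : ∀ n, ContinuousOn (f n) Ω) (hfM : ∀ n, ∀ x ∈ Ω, |f n x| ≤ M)
    (hlim : ∀ x ∈ Ω, Tendsto (fun n => f n x) atTop (𝓝 (φ x))) :
    Tendsto (fun n => wdenom Ω p lam α ψ (f n)) atTop (𝓝 (wdenom Ω p lam α ψ φ)) := by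
  have hfin : volume Ω < ⊤ := hb.measure_lt_top
  have havg : Tendsto (fun n => avgl Ω p lam α ψ (f n)) atTop (𝓝 (avgl Ω p lam α ψ φ)) := by
    refine Tendsto.div_const ?_ _
    refine tendsto_integral_of_dominated_convergence (fun _ => B * M) (fun n => ?_)
      (integrableOn_const hfin.ne) (fun n => ?_) ?_
    · exact (hWc.mul (hfc n)).aestronglyMeasurable hΩ.measurableSet
    · filter_upwards [ae_restrict_mem hΩ.measurableSet] with x hx
      rw [norm_mul]
      exact mul_le_mul (hB x hx) (hfM n x hx) (norm_nonneg _) ((abs_nonneg _).trans (hB x hx))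
    · filter_upwards [ae_restrict_mem hΩ.measurableSet] with x hx
      exact (hlim x hx).const_mul _
  set A := |avgl Ω p lam α ψ φ| + 1 with hA
  have hAev : ∀ᶠ n in atTop, |avgl Ω p lam α ψ (f n)| ≤ A := by
    filter_upwards [havg.abs.eventually (gt_mem_nhds (lt_add_one _))] with n hn using hn.le
  refine tendsto_integral_filter_of_dominated_convergence (fun _ => B * (M + A) ^ 2)
    (Eventually.of_forall fun n => ?_) ?_ (integrableOn_const hfin.ne) ?_
  · exact (hWc.mul (((hfc n).sub continuousOn_const).pow 2)).aestronglyMeasurable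
      hΩ.measurableSet
  · filter_upwards [hAev] with n hn
    filter_upwards [ae_restrict_mem hΩ.measurableSet] with x hx
    rw [norm_mul, norm_pow]
    refine mul_le_mul (hB x hx) ?_ (by positivity) ((abs_nonneg _).trans (hB x hx))
    refine pow_le_pow_left₀ (norm_nonneg _) ?_ 2
    exact (norm_sub_le _ _).trans (add_le_add (hfM n x hx) hn)
  · filter_upwards [ae_restrict_mem hΩ.measurableSet] with x hx
    exact (((hlim x hx).sub havg).pow 2).const_mul _

lemma rhoq_nonneg {N : ℕ} (p lam α : ℝ) (ψ : Euc N → ℝ) (x : Euc N) : 0 ≤ rhoq p lam α ψ x :=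
  Real.rpow_nonneg (le_max_right _ _) _

lemma wdenom_nonneg {N : ℕ} (Ω : Set (Euc N)) (p lam α : ℝ) (ψ φ : Euc N → ℝ) :
    0 ≤ wdenom Ω p lam α ψ φ :=
  integral_nonneg fun x => mul_nonneg (rhoq_nonneg _ _ _ _ x) (sq_nonneg _)

/-- The definition of `σ₁` as an infimum, with the denominator cleared. The quotients are bounded
below by `-λp`, so the real infimum is a genuine lower bound. -/
lemma stab_test {N : ℕ} {Ω : Set (Euc N)} {p lam α : ℝ} {ψ φ : Euc N → ℝ} (hφ : TestFun Ω φ) :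
    sigma1 Ω p lam α ψ * wdenom Ω p lam α ψ φ ≤
      (∫ x in Ω, ‖fderiv ℝ φ x‖ ^ 2) - lam * p * wdenom Ω p lam α ψ φ := by
  have hE : ∀ χ : Euc N → ℝ, 0 ≤ ∫ x in Ω, ‖fderiv ℝ χ x‖ ^ 2 := fun χ =>
    integral_nonneg fun x => by positivity
  rcases (wdenom_nonneg Ω p lam α ψ φ).eq_or_lt with h | h
  · rw [← h]
    simpa using hE φ
  · rw [← le_div_iff₀ h]
    refine csInf_le ⟨-(lam * p), ?_⟩ ⟨φ, hφ, h, rfl⟩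
    rintro s ⟨χ, _, hχ, rfl⟩
    rw [rayleigh, le_div_iff₀ hχ]
    linarith [hE χ]

/-- Mollification: a compactly supported `C¹` function is a limit of test functions, boundedly
and pointwise together with its derivative. -/
lemma exists_testFun_approx {N : ℕ} {Ω : Set (Euc N)} (hΩ : IsOpen Ω) {φ : Euc N → ℝ}
    (hφ : ContDiff ℝ 1 φ) (hc : HasCompactSupport φ) (hs : tsupport φ ⊆ Ω) :
    ∃ (f : ℕ → Euc N → ℝ) (M : ℝ), (∀ n, TestFun Ω (f n)) ∧ (∀ n x, |f n x| ≤ M) ∧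
      (∀ x, Tendsto (fun n => f n x) atTop (𝓝 (φ x))) ∧ (∀ n x, ‖fderiv ℝ (f n) x‖ ≤ M) ∧
      ∀ x, Tendsto (fun n => fderiv ℝ (f n) x) atTop (𝓝 (fderiv ℝ φ x)) := by
  obtain ⟨δ, hδ, hδΩ⟩ := hc.isCompact.exists_cthickening_subset_open hΩ hs
  have hcd : Continuous (fderiv ℝ φ) := hφ.continuous_fderiv (by norm_num)
  obtain ⟨M1, hM1⟩ := hc.exists_bound_of_continuous hφ.continuous
  obtain ⟨M2, hM2⟩ := (hc.fderiv ℝ).exists_bound_of_continuous hcd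
  have hr : ∀ n : ℕ, 0 < δ / (n + 1 : ℝ) := fun n => by positivity
  let b : ℕ → ContDiffBump (0 : Euc N) := fun n =>
    ⟨δ / (n + 1) / 2, δ / (n + 1), by have := hr n; positivity, by have := hr n; linarith⟩
  have hb0 : Tendsto (fun n => (b n).rOut) atTop (𝓝 0) :=
    tendsto_const_div_atTop_nhds_zero_nat δ |>.comp (tendsto_add_atTop_nat 1) |>.congr
      fun n => by simp [b]
  let f : ℕ → Euc N → ℝ := fun n =>
    (b n).normed volume ⋆[ContinuousLinearMap.lsmul ℝ ℝ, volume] φ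
  have hfd : ∀ n x, fderiv ℝ (f n) x =
      ((b n).normed volume ⋆[ContinuousLinearMap.lsmul ℝ ℝ, volume] fderiv ℝ φ) x := fun n x =>
    (hc.hasFDerivAt_convolution_right (ContinuousLinearMap.lsmul ℝ ℝ)
      ((b n).continuous_normed.locallyIntegrable) hφ x).fderiv
  refine ⟨f, max (3 * M1) (3 * M2), fun n => ⟨?_, ?_, ?_⟩, fun n x => ?_, fun x => ?_,
    fun n x => ?_, fun x => ?_⟩
  · exact (b n).hasCompactSupport_normed.contDiff_convolution_left _ (b n).contDiff_normed
      hφ.continuous.locallyIntegrable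
  · exact (b n).hasCompactSupport_normed.convolution _ hc
  · refine subset_trans ?_ hδΩ
    refine closure_minimal ?_ Metric.isClosed_cthickening
    refine (support_convolution_subset _).trans ?_
    rintro _ ⟨a, ha, c, hc', rfl⟩
    rw [(b n).support_normed_eq, mem_ball_zero_iff] at ha
    refine Metric.thickening_subset_cthickening _ _ ?_
    rw [Metric.mem_thickening_iff]
    refine ⟨c, subset_tsupport _ hc', ?_⟩
    have : (b n).rOut ≤ δ := div_le_self hδ.le (by simp)
    simpa [dist_eq_norm] using ha.trans_le this
  · have h1 := (b n).dist_normed_convolution_le (μ := volume) (x₀ := x) (ε := 2 * M1)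
      hφ.continuous.aestronglyMeasurable fun y _ => by
        rw [dist_eq_norm]
        linarith [norm_sub_le (φ y) (φ x), hM1 x, hM1 y]
    refine le_trans ?_ (le_max_left _ _)
    rw [dist_eq_norm] at h1
    have h2 := norm_le_norm_add_norm_sub' (f n x) (φ x)
    have h3 : |f n x| = ‖f n x‖ := rfl
    rw [h3]
    linarith [hM1 x]
  · exact ContDiffBump.convolution_tendsto_right_of_continuous hb0 hφ.continuous x
  · have h1 := (b n).dist_normed_convolution_le (μ := volume) (x₀ := x) (ε := 2 * M2)
      hcd.aestronglyMeasurable fun y _ => by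
        rw [dist_eq_norm]
        linarith [norm_sub_le (fderiv ℝ φ y) (fderiv ℝ φ x), hM2 x, hM2 y]
    refine le_trans ?_ (le_max_right _ _)
    rw [← hfd, dist_eq_norm] at h1
    have h2 := norm_le_norm_add_norm_sub' (fderiv ℝ (f n) x) (fderiv ℝ φ x)
    linarith [hM2 x]
  · simp_rw [hfd]
    exact ContDiffBump.convolution_tendsto_right_of_continuous hb0 hcd x

lemma stab_contDiff {N : ℕ} {Ω : Set (Euc N)} (hΩ : IsOpen Ω) (hb : Bornology.IsBounded Ω)
    {p lam α : ℝ} {ψ : Euc N → ℝ} (hWc : ContinuousOn (rhoq p lam α ψ) Ω) {B : ℝ}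
    (hB : ∀ x ∈ Ω, |rhoq p lam α ψ x| ≤ B) {φ : Euc N → ℝ}
    (hφ : ContDiff ℝ 1 φ) (hc : HasCompactSupport φ) (hs : tsupport φ ⊆ Ω) :
    sigma1 Ω p lam α ψ * wdenom Ω p lam α ψ φ ≤
      (∫ x in Ω, ‖fderiv ℝ φ x‖ ^ 2) - lam * p * wdenom Ω p lam α ψ φ := by
  obtain ⟨f, M, hf, hfM, hfl, hdM, hdl⟩ := exists_testFun_approx hΩ hφ hc hs
  have hfin : volume Ω < ⊤ := hb.measure_lt_top
  have L := wdenom_tendsto hΩ hb hWc hB (fun n => (hf n).1.continuous.continuousOn)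
    (fun n x _ => hfM n x) (fun x _ => hfl x)
  have LE : Tendsto (fun n => ∫ x in Ω, ‖fderiv ℝ (f n) x‖ ^ 2) atTop
      (𝓝 (∫ x in Ω, ‖fderiv ℝ φ x‖ ^ 2)) := by
    refine tendsto_integral_of_dominated_convergence (fun _ => M ^ 2) (fun n => ?_)
      (integrableOn_const hfin.ne) (fun n => Eventually.of_forall fun x => ?_)
      (Eventually.of_forall fun x => (hdl x).norm.pow 2)
    · exact (((hf n).1.continuous_fderiv (by norm_num)).norm.pow 2).aestronglyMeasurable
    · rw [norm_pow, norm_norm]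
      exact pow_le_pow_left₀ (norm_nonneg _) (hdM n x) 2
  exact le_of_tendsto_of_tendsto' (L.const_mul _) (LE.sub (L.const_mul _))
    fun n => stab_test (hf n)

/-- The stability inequality for admissible functions, obtained from their truncations. -/
lemma stab_adm {N : ℕ} {Ω : Set (Euc N)} (hΩ : IsOpen Ω) (hb : Bornology.IsBounded Ω)
    {p lam α : ℝ} {ψ : Euc N → ℝ} (hWc : ContinuousOn (rhoq p lam α ψ) Ω) {B : ℝ}
    (hB : ∀ x ∈ Ω, |rhoq p lam α ψ x| ≤ B) {w : Euc N → ℝ} (hw : Adm Ω w) :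
    sigma1 Ω p lam α ψ * wdenom Ω p lam α ψ w ≤
      (∫ x in Ω, ‖fderiv ℝ w x‖ ^ 2) - lam * p * wdenom Ω p lam α ψ w := by
  obtain ⟨M, hM0, hM⟩ := exists_bound hb hw.cont
  have hcd : ∀ n, ContDiff ℝ 1 (truncOn Ω n w) :=
    truncOn_contDiff hΩ hb hw.cont hw.bd hw.reg
  have hval : ∀ n, ∀ x ∈ Ω, truncOn Ω n w x = trunc n (w x) := fun n x hx =>
    indicator_of_mem hx _
  have L := wdenom_tendsto hΩ hb hWc hB (f := fun n => truncOn Ω n w) (φ := w) (M := M)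
    (fun n => (hcd n).continuous.continuousOn)
    (fun n x hx => by rw [hval n x hx]; exact (abs_trunc_le n _).trans (hM x hx))
    (fun x hx => (trunc_tendsto (w x)).congr fun n => (hval n x hx).symm)
  have LE : Tendsto (fun n => ∫ x in Ω, ‖fderiv ℝ (truncOn Ω n w) x‖ ^ 2) atTop
      (𝓝 (∫ x in Ω, ‖fderiv ℝ w x‖ ^ 2)) := by
    refine tendsto_integral_of_dominated_convergence (fun x => ‖fderiv ℝ w x‖ ^ 2) (fun n => ?_)
      (hw.integrable_normSq hΩ hb) (fun n => ?_) ?_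
    · exact (((hcd n).continuous_fderiv (by norm_num)).norm.pow 2).aestronglyMeasurable
    · filter_upwards [ae_restrict_mem hΩ.measurableSet] with x hx
      rw [norm_pow, norm_norm, truncOn_fderiv hΩ hw.reg n hx, norm_smul, Real.norm_eq_abs,
        abs_of_nonneg (cut_nonneg _ _)]
      exact pow_le_pow_left₀ (mul_nonneg (cut_nonneg _ _) (norm_nonneg _))
        (mul_le_of_le_one_left (norm_nonneg _) (cut_le_one _ _)) 2
    · filter_upwards [ae_restrict_mem hΩ.measurableSet, ae_fderiv_eq_zero hΩ hw.reg] with x hx h0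
      simp_rw [truncOn_fderiv hΩ hw.reg _ hx]
      by_cases h : w x = 0
      · simp [h0 h]
      · simpa using (((cut_tendsto h).smul_const (fderiv ℝ w x)).norm.pow 2)
  refine le_of_tendsto_of_tendsto' (L.const_mul _) (LE.sub (L.const_mul _)) fun n => ?_
  have hs := truncOn_support hΩ hb hw.cont hw.bd n
  exact stab_contDiff hΩ hb hWc hB (hcd n) hs.1 hs.2

/-! ### The solution pair -/

lemma rho_continuousOn {N : ℕ} {s : Set (Euc N)} {p lam α : ℝ} (hp : 1 < p) {ψ : Euc N → ℝ}
    (hψ : ContinuousOn ψ s) : ContinuousOn (rho p lam α ψ) s :=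
  ContinuousOn.rpow_const (by fun_prop) fun _ _ => Or.inr (by linarith)

lemma rhoq_continuousOn {N : ℕ} {s : Set (Euc N)} {p lam α : ℝ} (hp : 1 < p) {ψ : Euc N → ℝ}
    (hψ : ContinuousOn ψ s) : ContinuousOn (rhoq p lam α ψ) s :=
  ContinuousOn.rpow_const (by fun_prop) fun _ _ => Or.inr (by linarith)

/-- `ρ = ρ^{1/q} (α + λψ)`; the positive part may be dropped since `ρ^{1/q}` vanishes where
`α + λψ ≤ 0`. -/
lemma rho_eq {N : ℕ} {p lam α : ℝ} (hp : 1 < p) (ψ : Euc N → ℝ) (x : Euc N) :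
    rho p lam α ψ x = rhoq p lam α ψ x * (α + lam * ψ x) := by
  unfold rho rhoq
  rcases le_or_gt (α + lam * ψ x) 0 with h | h
  · rw [max_eq_right h, Real.zero_rpow (by linarith), Real.zero_rpow (by linarith), zero_mul]
  · rw [max_eq_left h.le, ← Real.rpow_add_one h.ne']
    congr 1
    ring

/-- If `∫ ρψ = 0` then `ρψ ≡ 0`; at a point with `ρ > 0` this forces `ψ = 0`, hence `α > 0`, hence
`ρ > 0` throughout `Ω` and `ψ ≡ 0`, contradicting `-Δψ = ρ`. -/
lemma integral_rho_mul_pos {N : ℕ} {Ω : Set (Euc N)} (hΩ : IsOpen Ω)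
    (hb : Bornology.IsBounded Ω) {p lam α : ℝ} (hp : 1 < p) (hlam : 0 < lam) {ψ : Euc N → ℝ}
    (hψpos : ∀ x ∈ Ω, 0 ≤ ψ x) (hsol : SolP Ω p lam α ψ) :
    0 < ∫ x in Ω, rho p lam α ψ x * ψ x := by
  obtain ⟨hc, hreg, hbd, heq, hone⟩ := hsol
  have hrn : ∀ x, 0 ≤ rho p lam α ψ x := fun x => Real.rpow_nonneg (le_max_right _ _) _
  have hrc := rho_continuousOn (p := p) (lam := lam) (α := α) hp hc
  have hint : IntegrableOn (fun x => rho p lam α ψ x * ψ x) Ω :=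
    ((hrc.mul hc).integrableOn_compact hb.isCompact_closure).mono_set subset_closure
  have hnn : 0 ≤ᵐ[volume.restrict Ω] fun x => rho p lam α ψ x * ψ x := by
    filter_upwards [ae_restrict_mem hΩ.measurableSet] with x hx
    exact mul_nonneg (hrn x) (hψpos x hx)
  refine lt_of_le_of_ne (integral_nonneg_of_ae hnn) fun h0 => ?_
  have hae := (setIntegral_eq_zero_iff_of_nonneg_ae hnn hint).1 h0.symm
  have hz : EqOn (fun x => rho p lam α ψ x * ψ x) 0 Ω :=
    Measure.eqOn_open_of_ae_eq hae hΩ ((hrc.mul hc).mono subset_closure) continuousOn_const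
  obtain ⟨x, hx, hxr⟩ : ∃ x ∈ Ω, 0 < rho p lam α ψ x := by
    by_contra! h
    rw [setIntegral_congr_fun hΩ.measurableSet
      (g := fun _ => (0 : ℝ)) fun x hx => le_antisymm (h x hx) (hrn x)] at hone
    simp at hone
  have hψx : ψ x = 0 := (mul_eq_zero.1 (hz hx)).resolve_left hxr.ne'
  have hα : 0 < α := by
    by_contra! hα
    rw [rho, hψx, mul_zero, add_zero, max_eq_right hα, Real.zero_rpow (by linarith)] at hxr
    exact lt_irrefl _ hxr
  have hψ0 : EqOn ψ 0 Ω := by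
    intro y hy
    have h1 : 0 < α + lam * ψ y := by
      have := mul_nonneg hlam.le (hψpos y hy)
      linarith
    have h2 : 0 < rho p lam α ψ y := Real.rpow_pos_of_pos (lt_max_of_lt_left h1) _
    exact (mul_eq_zero.1 (hz hy)).resolve_left h2.ne'
  have hlap : lap ψ x = 0 := by
    have hpd : ∀ i, (fun y => fderiv ℝ ψ y (EuclideanSpace.single i 1)) =ᶠ[𝓝 x] fun _ => 0 := by
      intro i
      filter_upwards [hΩ.mem_nhds hx] with y hy
      have : ψ =ᶠ[𝓝 y] fun _ => 0 := by
        filter_upwards [hΩ.mem_nhds hy] with z hz using hψ0 hz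
      rw [this.fderiv_eq]
      simp
    refine Finset.sum_eq_zero fun i _ => ?_
    rw [(hpd i).fderiv_eq]
    simp
  have := heq x hx
  rw [hlap] at this
  linarith

/-- monotonicity of `α` (pointwise form).  If `(α,ψ)` solves `(P)_λ`
with `λ > 0`, `ψ ≥ 0` on `Ω` and `σ₁(α,ψ) > 0`, and `w ∈ C²(Ω̄)` vanishes on `∂Ω`
and satisfies `-Δw = λp ρ_λ^{1/q}[w]_λ + ρ_λ` in `Ω`, then `⟨w⟩_λ > 0`; more
precisely `λp ⟨w⟩_λ ≥ λ(p-1) σ₁(α,ψ) ∫ ρ_λ^{1/q}[w]_λ² + λ ∫ ρ_λ ψ` and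
`∫ ρ_λ ψ > 0`. -/
theorem alpha_monotone_pointwise
    {N : ℕ} (hN : 2 ≤ N) (Ω : Set (Euc N)) (hΩ : IsC3Domain Ω) (hvol : volume Ω = 1)
    (p : ℝ) (hp : 1 < p) (hpN : 3 ≤ N → p < (N : ℝ) / ((N : ℝ) - 2))
    (lam α : ℝ) (hlam : 0 < lam)
    (ψ : Euc N → ℝ) (hψpos : ∀ x ∈ Ω, 0 ≤ ψ x) (hsol : SolP Ω p lam α ψ)
    (hσ : 0 < sigma1 Ω p lam α ψ)
    (w : Euc N → ℝ)
    (hwreg : ContDiffOn ℝ 2 w (closure Ω))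
    (hwbd : ∀ x ∈ frontier Ω, w x = 0)
    (hweq : ∀ x ∈ Ω,
      -lap w x = lam * p * (rhoq p lam α ψ x * brk Ω p lam α ψ w x) +
        rho p lam α ψ x) :
    0 < avgl Ω p lam α ψ w ∧
    lam * (p - 1) * sigma1 Ω p lam α ψ *
        (∫ x in Ω, rhoq p lam α ψ x * brk Ω p lam α ψ w x ^ 2) +
      lam * (∫ x in Ω, rho p lam α ψ x * ψ x) ≤
        lam * p * avgl Ω p lam α ψ w ∧
    0 < ∫ x in Ω, rho p lam α ψ x * ψ x := by
  obtain ⟨hopen, -, hb, -⟩ := hΩ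
  have hY := integral_rho_mul_pos hopen hb hp hlam hψpos hsol
  obtain ⟨hψc, hψreg, hψbd, hψeq, hone⟩ := hsol
  have hmeas := hopen.measurableSet
  have hrc : ContinuousOn (rho p lam α ψ) (closure Ω) := rho_continuousOn hp hψc
  have hWc : ContinuousOn (rhoq p lam α ψ) (closure Ω) := rhoq_continuousOn hp hψc
  have hwc : ContinuousOn w (closure Ω) := hwreg.continuousOn
  have hkc : ContinuousOn (brk Ω p lam α ψ w) (closure Ω) := hwc.sub continuousOn_const
  have hI : ∀ {f : Euc N → ℝ}, ContinuousOn f (closure Ω) → IntegrableOn f Ω := fun hf =>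
    (hf.integrableOn_compact hb.isCompact_closure).mono_set subset_closure
  have aψ : Adm Ω ψ := by
    refine ⟨hψc, hψreg, hψbd, ?_⟩
    obtain ⟨R, -, hR⟩ := exists_bound hb hrc
    refine ⟨R, fun x hx => ?_⟩
    rw [← abs_neg, hψeq x hx]
    exact hR x hx
  have aw : Adm Ω w := by
    refine ⟨hwc, hwreg.mono subset_closure, hwbd, ?_⟩
    obtain ⟨R, -, hR⟩ := exists_bound hb (((hWc.mul hkc).const_mul (lam * p)).add hrc)
    refine ⟨R, fun x hx => ?_⟩
    rw [← abs_neg, hweq x hx]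
    exact hR x hx
  obtain ⟨B, -, hB⟩ := exists_bound hb hWc
  have hstab := stab_adm hopen hb (hWc.mono subset_closure) hB aw
  -- `∫ ρ^{1/q} ≠ 0`: otherwise `ρ^{1/q}`, hence `ρ`, would vanish almost everywhere.
  have hm : ∫ x in Ω, rhoq p lam α ψ x ≠ 0 := by
    intro h
    have h1 := (setIntegral_eq_zero_iff_of_nonneg_ae
      (Eventually.of_forall fun x => rhoq_nonneg p lam α ψ x) (hI hWc)).1 h
    have h2 : ∫ x in Ω, rho p lam α ψ x = 0 := by
      refine integral_eq_zero_of_ae ?_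
      filter_upwards [h1] with x hx
      rw [rho_eq hp, hx]
      simp
    linarith
  set a := avgl Ω p lam α ψ w with ha
  have hbrk : ∀ x, brk Ω p lam α ψ w x = w x - a := fun x => rfl
  -- the weighted mean of `[w]` vanishes
  have E0 : ∫ x in Ω, rhoq p lam α ψ x * brk Ω p lam α ψ w x = 0 := by
    have h1 : ∀ x, rhoq p lam α ψ x * brk Ω p lam α ψ w x
        = rhoq p lam α ψ x * w x - a * rhoq p lam α ψ x := fun x => by rw [hbrk]; ring
    simp_rw [h1]
    rw [integral_sub, integral_const_mul, ha, avgl, div_mul_cancel₀ _ hm, sub_self]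
    exacts [hI (hWc.mul hwc), hI (hWc.const_mul a)]
  -- test the `ψ`-equation with `w` and the `w`-equation with `ψ`
  have E1 : ∫ x in Ω, rho p lam α ψ x * w x
      = lam * p * (∫ x in Ω, rhoq p lam α ψ x * brk Ω p lam α ψ w x * ψ x)
        + ∫ x in Ω, rho p lam α ψ x * ψ x := by
    have g1 := green hopen hb aψ aw
    have g2 := green hopen hb aw aψ
    have hcomm : gdot ψ w = gdot w ψ := by
      funext x
      exact Finset.sum_congr rfl fun i _ => mul_comm _ _
    rw [hcomm, g2] at g1
    rw [setIntegral_congr_fun hmeas (g := fun x => lam * p *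
        (rhoq p lam α ψ x * brk Ω p lam α ψ w x * ψ x) + rho p lam α ψ x * ψ x)
        fun x hx => by simp only [hweq x hx]; ring,
      integral_add, integral_const_mul, setIntegral_congr_fun hmeas (f := fun x => -lap ψ x * w x)
        (g := fun x => rho p lam α ψ x * w x) fun x hx => by simp only [hψeq x hx]] at g1
    exacts [g1.symm, hI (((hWc.mul hkc).mul hψc).const_mul _), hI (hrc.mul hψc)]
  -- use `λ ρ^{1/q} ψ = ρ - α ρ^{1/q}`, the mean-zero property of `[w]` and `∫ ρ = 1`
  have E2 : lam * (∫ x in Ω, rhoq p lam α ψ x * brk Ω p lam α ψ w x * ψ x)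
      = (∫ x in Ω, rho p lam α ψ x * w x) - a := by
    have h1 : ∀ x, lam * (rhoq p lam α ψ x * brk Ω p lam α ψ w x * ψ x)
        = rho p lam α ψ x * w x - a * rho p lam α ψ x
          - α * (rhoq p lam α ψ x * brk Ω p lam α ψ w x) := fun x => by
      rw [rho_eq hp, hbrk]; ring
    rw [← integral_const_mul]
    simp_rw [h1]
    rw [integral_sub, integral_sub, integral_const_mul, integral_const_mul, hone, E0, mul_one,
      mul_zero, sub_zero]
    exacts [hI (hrc.mul hwc), hI (hrc.const_mul a), hI ((hrc.mul hwc).sub (hrc.const_mul a)),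
      hI ((hWc.mul hkc).const_mul α)]
  -- test the `w`-equation with `w`
  have E3 : ∫ x in Ω, ‖fderiv ℝ w x‖ ^ 2
      = lam * p * wdenom Ω p lam α ψ w + ∫ x in Ω, rho p lam α ψ x * w x := by
    have g := green hopen hb aw aw
    simp_rw [gdot_self] at g
    rw [g, setIntegral_congr_fun hmeas (g := fun x => lam * p *
        (rhoq p lam α ψ x * brk Ω p lam α ψ w x ^ 2)
        + lam * p * a * (rhoq p lam α ψ x * brk Ω p lam α ψ w x) + rho p lam α ψ x * w x)
        fun x hx => by simp only [hweq x hx, hbrk]; ring,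
      integral_add, integral_add, integral_const_mul, integral_const_mul, E0, mul_zero, add_zero]
    exacts [rfl, hI ((hWc.mul (hkc.pow 2)).const_mul _), hI ((hWc.mul hkc).const_mul _),
      hI (((hWc.mul (hkc.pow 2)).const_mul _).add ((hWc.mul hkc).const_mul _)),
      hI (hrc.mul hwc)]
  have hD := wdenom_nonneg Ω p lam α ψ w
  change 0 < a ∧ lam * (p - 1) * sigma1 Ω p lam α ψ * wdenom Ω p lam α ψ w + _ ≤ _ ∧ _
  set X := ∫ x in Ω, rho p lam α ψ x * w x
  set Y := ∫ x in Ω, rho p lam α ψ x * ψ x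
  set Z := ∫ x in Ω, rhoq p lam α ψ x * brk Ω p lam α ψ w x * ψ x
  set D := wdenom Ω p lam α ψ w
  set σ := sigma1 Ω p lam α ψ
  have hX : σ * D ≤ X := by linarith
  have hkey : p * a = (p - 1) * X + Y := by linear_combination p * E2 + E1
  have hineq : (p - 1) * (σ * D) + Y ≤ p * a := by
    rw [hkey]
    gcongr
  refine ⟨?_, ?_, hY⟩
  · have h1 : 0 ≤ (p - 1) * (σ * D) :=
      mul_nonneg (by linarith) (mul_nonneg hσ.le hD)
    exact pos_of_mul_pos_right (by linarith : 0 < p * a) (by linarith)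
  · calc lam * (p - 1) * σ * D + lam * Y = lam * ((p - 1) * (σ * D) + Y) := by ring
      _ ≤ lam * (p * a) := by gcongr
      _ = lam * p * a := by ring

end
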